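/- Let n ≥ 7 with n ≡ 1 (mod 6). There exists a polytope P ⊆ [0,1]^n (the convex hull of finitely many points) such that P_I = L^2(P) and L^2(P) ⊊ T^{(n−1)/6}(P). -/

import Mathlib

open Set

def cube (n : ℕ) : Set (Fin n → ℝ) := {x | ∀ i, 0 ≤ x i ∧ x i ≤ 1}

def corners (n : ℕ) : Set (Fin n → ℝ) := {x | ∀ i, x i = 0 ∨ x i = 1}

def integerHull (n : ℕ) (P : Set (Fin n → ℝ)) : Set (Fin n → ℝ) :=
  convexHull ℝ (P ∩ corners n)

def Lop (n : ℕ) (P : Set (Fin n → ℝ)) : Set (Fin n → ℝ) :=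
  ⋂ i : Fin n, convexHull ℝ ((P ∩ {x | x i = 0}) ∪ (P ∩ {x | x i = 1}))

def Lk (n : ℕ) : ℕ → Set (Fin n → ℝ) → Set (Fin n → ℝ)
  | 0, P => P
  | k + 1, P => Lop n (Lk n k P)

/-- `R_k(P)`: the family of branch-and-bound relaxations of `P` of height at most `k`. -/
def Rk (n : ℕ) : ℕ → Set (Fin n → ℝ) → Set (Set (Fin n → ℝ))
  | 0, P => {P}
  | k + 1, P => {P} ∪ {Q | ∃ j : Fin n, ∃ A ∈ Rk n k (P ∩ {x | x j = 0}),
      ∃ B ∈ Rk n k (P ∩ {x | x j = 1}), Q = convexHull ℝ (A ∪ B)}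

/-- The height-`k` branch-and-bound operator `T^k`. -/
def Tk (n k : ℕ) (P : Set (Fin n → ℝ)) : Set (Fin n → ℝ) :=
  ⋂ Q ∈ Rk n k P, Q

/-!
Fix a coordinate `l`, and let `P` be spanned by the corners of the cube with `x l = 0` together
with the points `halfOnes i`, `i ≠ l`, obtained from the all-ones point by lowering coordinate `i`
to `1/2`.

A zero coordinate of a point of `P` forces its `l`-th coordinate to vanish, so `x l ≤ x j` on `L(P)`
for every `j`. A point of `L(P)` with `x l = 1` would therefore be the all-ones point, which is not
in `P`. The second application of `L`, in direction `l`, then leaves only the face `x l = 0`, which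
is the integer hull of `P`.

On the other hand, a branch-and-bound relaxation of height `k` contains all points of `P` that agree
with the all-ones point on the at most `k` coordinates branched on along one path. For `k ≤ n - 2`
some `halfOnes i` is such a point, and the centre of the cube is its midpoint with a point of the
face `x l = 0`.
-/

section LiftAndProject

variable {n : ℕ} {P : Set (Fin n → ℝ)}

theorem convex_Lop : Convex ℝ (Lop n P) :=
  convex_iInter fun _ => convex_convexHull ℝ _

theorem Lop_subset (i : Fin n) (hP : Convex ℝ P) : Lop n P ⊆ P :=
  (iInter_subset _ i).trans <|
    convexHull_min (union_subset inter_subset_left inter_subset_left) hP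

theorem inter_corners_subset_Lop : P ∩ corners n ⊆ Lop n P := by
  rintro x ⟨hxP, hx⟩
  exact mem_iInter.2 fun i => subset_convexHull ℝ _ <|
    (hx i).imp (fun h => ⟨hxP, h⟩) (fun h => ⟨hxP, h⟩)

theorem convex_Lk (hP : Convex ℝ P) : ∀ k, Convex ℝ (Lk n k P)
  | 0 => hP
  | _ + 1 => convex_Lop

theorem inter_corners_subset_Lk : ∀ k, P ∩ corners n ⊆ Lk n k P
  | 0 => inter_subset_left
  | k + 1 => fun _ hx => inter_corners_subset_Lop ⟨inter_corners_subset_Lk k hx, hx.2⟩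

theorem integerHull_subset_Lk (hP : Convex ℝ P) (k : ℕ) : integerHull n P ⊆ Lk n k P :=
  convexHull_min (inter_corners_subset_Lk k) (convex_Lk hP k)

theorem Lop_subset_inter_of_forall_apply_ne_one (hP : Convex ℝ P) {i : Fin n}
    (h : ∀ x ∈ P, x i ≠ 1) : Lop n P ⊆ P ∩ {x | x i = 0} := by
  have hface : Convex ℝ (P ∩ {x | x i = 0}) :=
    hP.inter (convex_hyperplane (LinearMap.proj (R := ℝ) (φ := fun _ => ℝ) i).isLinear 0)
  refine (iInter_subset _ i).trans (convexHull_min ?_ hface)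
  exact union_subset subset_rfl fun x hx => absurd hx.2 (h x hx.1)

theorem convex_setOf_apply_le_mul_apply {ι : Type*} (i j : ι) (c : ℝ) :
    Convex ℝ {x : ι → ℝ | x i ≤ c * x j} := by
  intro x hx y hy a b ha hb _
  have hax : a * x i ≤ a * (c * x j) := mul_le_mul_of_nonneg_left hx ha
  have hby : b * y i ≤ b * (c * y j) := mul_le_mul_of_nonneg_left hy hb
  change a * x i + b * y i ≤ c * (a * x j + b * y j)
  linarith

theorem apply_le_apply_of_mem_Lop (hP : P ⊆ cube n) {i j : Fin n}
    (hij : ∀ x ∈ P, x j = 0 → x i = 0) {x : Fin n → ℝ} (hx : x ∈ Lop n P) : x i ≤ x j := by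
  have hsub : P ∩ {x | x j = 0} ∪ P ∩ {x | x j = 1} ⊆ {x | x i ≤ 1 * x j} := by
    rintro y (⟨hy, hyj : y j = 0⟩ | ⟨hy, hyj : y j = 1⟩)
    · simp [hyj, hij y hy hyj]
    · simpa [hyj] using (hP hy i).2
  simpa using convexHull_min hsub (convex_setOf_apply_le_mul_apply i j 1) (mem_iInter.1 hx j)

theorem apply_ne_one_of_mem_Lop (hPconv : Convex ℝ P) (hP : P ⊆ cube n) (hone : 1 ∉ P) {i : Fin n}
    (hi : ∀ x ∈ P, ∀ j, x j = 0 → x i = 0) {x : Fin n → ℝ} (hx : x ∈ Lop n P) : x i ≠ 1 := by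
  intro hxi
  have hxP : x ∈ P := Lop_subset i hPconv hx
  have hx_eq : x = 1 := funext fun j =>
    le_antisymm (hP hxP j).2 <|
      hxi.ge.trans (apply_le_apply_of_mem_Lop hP (fun y hy => hi y hy j) hx)
  exact hone (hx_eq ▸ hxP)

theorem Lk_two_subset_inter (hPconv : Convex ℝ P) (hP : P ⊆ cube n) (hone : 1 ∉ P) {i : Fin n}
    (hi : ∀ x ∈ P, ∀ j, x j = 0 → x i = 0) : Lk n 2 P ⊆ P ∩ {x | x i = 0} :=
  (Lop_subset_inter_of_forall_apply_ne_one convex_Lop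
    fun _ => apply_ne_one_of_mem_Lop hPconv hP hone hi).trans
      (inter_subset_inter_left _ (Lop_subset i hPconv))

end LiftAndProject

section BranchAndBound

variable {n k : ℕ} {P Q : Set (Fin n → ℝ)}

theorem convex_of_mem_Rk (hP : Convex ℝ P) (hQ : Q ∈ Rk n k P) : Convex ℝ Q := by
  cases k with
  | zero => exact mem_singleton_iff.1 hQ ▸ hP
  | succ k =>
    rcases hQ with rfl | ⟨j, A, -, B, -, rfl⟩
    · exact hP
    · exact convex_convexHull ℝ _

/-- For `S` take the coordinates branched on along the path that follows `c`. -/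
theorem exists_card_le_inter_subset_of_mem_Rk {c : Fin n → ℝ} (hc : c ∈ corners n)
    (hQ : Q ∈ Rk n k P) :
    ∃ S : Finset (Fin n), S.card ≤ k ∧ P ∩ {x | ∀ j ∈ S, x j = c j} ⊆ Q := by
  induction k generalizing P Q with
  | zero => exact ⟨∅, le_rfl, mem_singleton_iff.1 hQ ▸ inter_subset_left⟩
  | succ k ih =>
    rcases hQ with rfl | ⟨j, A, hA, B, hB, rfl⟩
    · exact ⟨∅, Nat.zero_le _, inter_subset_left⟩
    · obtain ⟨C, hC, hCsub⟩ :
          ∃ C ∈ Rk n k (P ∩ {x | x j = c j}), C ⊆ convexHull ℝ (A ∪ B) := by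
        rcases hc j with hj | hj <;> rw [hj]
        · exact ⟨A, hA, subset_union_left.trans (subset_convexHull ℝ _)⟩
        · exact ⟨B, hB, subset_union_right.trans (subset_convexHull ℝ _)⟩
      obtain ⟨S, hS, hSC⟩ := ih hC
      refine ⟨insert j S, (Finset.card_insert_le j S).trans (by lia), fun x hx => ?_⟩
      obtain ⟨hxj, hxS⟩ := Finset.forall_mem_insert _ _ _ |>.1 hx.2
      exact hCsub (hSC ⟨⟨hx.1, hxj⟩, hxS⟩)

theorem integerHull_subset_of_mem_Rk (hP : Convex ℝ P) (hQ : Q ∈ Rk n k P) :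
    integerHull n P ⊆ Q := by
  refine convexHull_min (fun x hx => ?_) (convex_of_mem_Rk hP hQ)
  obtain ⟨S, -, hS⟩ := exists_card_le_inter_subset_of_mem_Rk hx.2 hQ
  exact hS ⟨hx.1, fun _ _ => rfl⟩

theorem integerHull_subset_Tk (hP : Convex ℝ P) (k : ℕ) : integerHull n P ⊆ Tk n k P :=
  subset_iInter₂ fun _ => integerHull_subset_of_mem_Rk hP

end BranchAndBound

section Cube

variable {n : ℕ}

theorem convex_cube : Convex ℝ (cube n) := by
  have : cube n = Icc 0 1 := by ext x; simp [cube, Pi.le_def, forall_and]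
  exact this ▸ convex_Icc 0 1

theorem finite_corners : (corners n).Finite := by
  have : corners n = univ.pi fun _ => {0, 1} := by ext x; simp [corners]
  exact this ▸ Finite.pi fun _ => toFinite _

theorem corners_subset_cube : corners n ⊆ cube n := by
  intro x hx i
  rcases hx i with h | h <;> simp [h]

theorem cube_inter_subset_convexHull_corners_inter (i : Fin n) :
    cube n ∩ {x | x i = 0} ⊆ convexHull ℝ (corners n ∩ {x | x i = 0}) := by
  rintro x ⟨hx, hxi : x i = 0⟩
  let t : Fin n → Set ℝ := Function.update (fun _ => {0, 1}) i {0}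
  have ht : univ.pi t ⊆ corners n ∩ {x | x i = 0} := by
    intro y hy
    have hyi : y i = 0 := by simpa [t] using hy i (mem_univ i)
    refine ⟨fun j => ?_, hyi⟩
    rcases eq_or_ne j i with rfl | hj
    · exact Or.inl hyi
    · simpa [t, hj] using hy j (mem_univ j)
  refine convexHull_mono ht (mem_convexHull_pi fun j _ => ?_)
  rcases eq_or_ne j i with rfl | hj
  · simp [t, hxi]
  · simpa [t, hj, convexHull_pair, segment_eq_Icc (zero_le_one' ℝ)] using hx j

end Cube

/-- The all-ones point with coordinate `i` lowered to `1/2`, that is, the centre of the edge of the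
cube that joins the all-ones corner to its neighbour in direction `i`. -/
noncomputable def halfOnes {n : ℕ} (i : Fin n) : Fin n → ℝ :=
  Function.update 1 i (1 / 2)

/-- The vertices of `gapPolytope l`: all corners on the face `x l = 0`, and the centres `halfOnes i`
of the edges at the all-ones corner in the directions `i ≠ l`. -/
def gapVertices {n : ℕ} (l : Fin n) : Set (Fin n → ℝ) :=
  (corners n ∩ {x | x l = 0}) ∪ halfOnes '' {l}ᶜ

/-- The polytope separating the two hierarchies: two rounds of `L` reduce it to its integer hull,
whereas branch-and-bound of height `n - 2` does not. -/
def gapPolytope {n : ℕ} (l : Fin n) : Set (Fin n → ℝ) :=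
  convexHull ℝ (gapVertices l)

section GapPolytope

variable {n : ℕ} {l i j : Fin n}

theorem halfOnes_apply_self (i : Fin n) : halfOnes i i = 1 / 2 :=
  Function.update_self ..

theorem halfOnes_apply_of_ne (h : j ≠ i) : halfOnes i j = 1 :=
  Function.update_of_ne h ..

theorem half_le_halfOnes_apply (i j : Fin n) : 1 / 2 ≤ halfOnes i j := by
  rcases eq_or_ne j i with rfl | h
  · exact (halfOnes_apply_self j).ge
  · rw [halfOnes_apply_of_ne h]; norm_num

theorem halfOnes_mem_cube (i : Fin n) : halfOnes i ∈ cube n := by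
  refine fun j => ⟨by linarith [half_le_halfOnes_apply i j], ?_⟩
  rcases eq_or_ne j i with rfl | h
  · rw [halfOnes_apply_self]; norm_num
  · exact (halfOnes_apply_of_ne h).le

theorem finite_gapVertices (l : Fin n) : (gapVertices l).Finite :=
  (finite_corners.inter_of_left _).union (toFinite _)

theorem gapVertices_subset_cube (l : Fin n) : gapVertices l ⊆ cube n :=
  union_subset (inter_subset_left.trans corners_subset_cube)
    (image_subset_iff.2 fun i _ => halfOnes_mem_cube i)

theorem convex_gapPolytope (l : Fin n) : Convex ℝ (gapPolytope l) :=
  convex_convexHull ℝ _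

theorem gapPolytope_subset_cube (l : Fin n) : gapPolytope l ⊆ cube n :=
  convexHull_min (gapVertices_subset_cube l) convex_cube

theorem halfOnes_mem_gapPolytope (h : i ≠ l) : halfOnes i ∈ gapPolytope l :=
  subset_convexHull ℝ _ (Or.inr (mem_image_of_mem _ h))

theorem apply_le_two_mul_apply_of_mem_gapPolytope {x : Fin n → ℝ} (hx : x ∈ gapPolytope l)
    (j : Fin n) : x l ≤ 2 * x j := by
  refine convexHull_min ?_ (convex_setOf_apply_le_mul_apply l j 2) hx
  rintro v (⟨hv, hvl : v l = 0⟩ | ⟨i, -, rfl⟩)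
  · change v l ≤ 2 * v j
    linarith [(corners_subset_cube hv j).1]
  · change halfOnes i l ≤ 2 * halfOnes i j
    linarith [half_le_halfOnes_apply i j, (halfOnes_mem_cube i l).2]

theorem apply_eq_zero_of_mem_gapPolytope {x : Fin n → ℝ} (hx : x ∈ gapPolytope l) (hj : x j = 0) :
    x l = 0 :=
  le_antisymm (by simpa [hj] using apply_le_two_mul_apply_of_mem_gapPolytope hx j)
    (gapPolytope_subset_cube l hx l).1

theorem one_notMem_gapPolytope (l : Fin n) : 1 ∉ gapPolytope l := by
  let coordSum : (Fin n → ℝ) →ₗ[ℝ] ℝ := ∑ j, LinearMap.proj j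
  have hsum : gapPolytope l ⊆ {x | coordSum x < coordSum 1} := by
    refine convexHull_min (fun v hv => ?_) (convex_halfSpace_lt coordSum.isLinear _)
    have hlt : ∃ i, v i < 1 := by
      rcases hv with ⟨-, hvl : v l = 0⟩ | ⟨i, -, rfl⟩
      · exact ⟨l, by linarith⟩
      · exact ⟨i, by rw [halfOnes_apply_self]; norm_num⟩
    simpa [coordSum, -Finset.sum_const] using
      Finset.sum_lt_sum (fun j _ => (gapVertices_subset_cube l hv j).2) (by simpa using hlt)
  exact fun h => lt_irrefl (coordSum 1) (hsum h)

theorem cube_inter_subset_integerHull_gapPolytope (l : Fin n) :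
    cube n ∩ {x | x l = 0} ⊆ integerHull n (gapPolytope l) :=
  (cube_inter_subset_convexHull_corners_inter l).trans <|
    convexHull_mono fun _ hx => ⟨subset_convexHull ℝ _ (Or.inl hx), hx.1⟩

theorem Lk_two_gapPolytope_subset (l : Fin n) :
    Lk n 2 (gapPolytope l) ⊆ cube n ∩ {x | x l = 0} :=
  (Lk_two_subset_inter (convex_gapPolytope l) (gapPolytope_subset_cube l) (one_notMem_gapPolytope l)
    fun _ hx _ => apply_eq_zero_of_mem_gapPolytope hx).trans
      (inter_subset_inter_left _ (gapPolytope_subset_cube l))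

theorem integerHull_gapPolytope_eq_Lk_two (l : Fin n) :
    integerHull n (gapPolytope l) = Lk n 2 (gapPolytope l) :=
  (integerHull_subset_Lk (convex_gapPolytope l) 2).antisymm
    ((Lk_two_gapPolytope_subset l).trans (cube_inter_subset_integerHull_gapPolytope l))

theorem one_sub_halfOnes_mem_integerHull_gapPolytope (h : i ≠ l) :
    1 - halfOnes i ∈ integerHull n (gapPolytope l) := by
  refine cube_inter_subset_integerHull_gapPolytope l ⟨fun j => ?_, ?_⟩
  · have hj := halfOnes_mem_cube i j
    exact ⟨sub_nonneg.2 hj.2, sub_le_self _ hj.1⟩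
  · exact sub_eq_zero.2 (halfOnes_apply_of_ne h.symm).symm

theorem exists_halfOnes_mem_of_mem_Rk {k : ℕ} (hk : k + 2 ≤ n) {Q : Set (Fin n → ℝ)}
    (hQ : Q ∈ Rk n k (gapPolytope l)) : ∃ i, i ≠ l ∧ halfOnes i ∈ Q := by
  have hone : (1 : Fin n → ℝ) ∈ corners n := fun _ => Or.inr rfl
  obtain ⟨S, hScard, hSQ⟩ := exists_card_le_inter_subset_of_mem_Rk hone hQ
  obtain ⟨i, hi⟩ : ∃ i, i ∉ insert l S := by
    refine (Finset.exists_mem_notMem_of_card_lt_card (t := Finset.univ) ?_).imp fun _ h => h.2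
    rw [Finset.card_univ, Fintype.card_fin]
    exact (Finset.card_insert_le l S).trans_lt (by lia)
  obtain ⟨hil, hiS⟩ := not_or.1 (Finset.mem_insert.not.1 hi)
  exact ⟨i, hil, hSQ ⟨halfOnes_mem_gapPolytope hil,
    fun j hj => halfOnes_apply_of_ne (ne_of_mem_of_not_mem hj hiS)⟩⟩

theorem center_mem_Tk_gapPolytope {k : ℕ} (hk : k + 2 ≤ n) (l : Fin n) :
    (fun _ => 1 / 2) ∈ Tk n k (gapPolytope l) := by
  refine mem_iInter₂.2 fun Q hQ => ?_
  obtain ⟨i, hil, hiQ⟩ := exists_halfOnes_mem_of_mem_Rk hk hQ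
  have hi'Q : 1 - halfOnes i ∈ Q :=
    integerHull_subset_of_mem_Rk (convex_gapPolytope l) hQ
      (one_sub_halfOnes_mem_integerHull_gapPolytope hil)
  have hmid : midpoint ℝ (halfOnes i) (1 - halfOnes i) = fun _ => 1 / 2 := by
    ext j
    simp [midpoint_eq_smul_add]
  exact hmid ▸ (convex_of_mem_Rk (convex_gapPolytope l) hQ).midpoint_mem hiQ hi'Q

theorem center_notMem_Lk_two_gapPolytope (l : Fin n) :
    (fun _ => 1 / 2) ∉ Lk n 2 (gapPolytope l) := by
  intro h
  have : (1 / 2 : ℝ) = 0 := (Lk_two_gapPolytope_subset l h).2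
  norm_num at this

theorem Lk_two_gapPolytope_ssubset_Tk {k : ℕ} (hk : k + 2 ≤ n) (l : Fin n) :
    Lk n 2 (gapPolytope l) ⊂ Tk n k (gapPolytope l) := by
  have hsub : Lk n 2 (gapPolytope l) ⊆ Tk n k (gapPolytope l) :=
    integerHull_gapPolytope_eq_Lk_two l ▸ integerHull_subset_Tk (convex_gapPolytope l) k
  exact (ssubset_iff_of_subset hsub).2
    ⟨_, center_mem_Tk_gapPolytope hk l, center_notMem_Lk_two_gapPolytope l⟩

end GapPolytope

theorem stmt19_general (n k : ℕ) (hk : k + 2 ≤ n) :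
    ∃ (V : Set (Fin n → ℝ)) (P : Set (Fin n → ℝ)), V.Finite ∧ P = convexHull ℝ V ∧
      P ⊆ cube n ∧
      integerHull n P = Lk n 2 P ∧
      Lk n 2 P ⊂ Tk n k P := by
  let l : Fin n := ⟨0, by lia⟩
  exact ⟨gapVertices l, gapPolytope l, finite_gapVertices l, rfl, gapPolytope_subset_cube l,
    integerHull_gapPolytope_eq_Lk_two l, Lk_two_gapPolytope_ssubset_Tk hk l⟩

theorem stmt19 (n : ℕ) (hn : 7 ≤ n) (hmod : n % 6 = 1) :
    ∃ (V : Set (Fin n → ℝ)) (P : Set (Fin n → ℝ)), V.Finite ∧ P = convexHull ℝ V ∧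
      P ⊆ cube n ∧
      integerHull n P = Lk n 2 P ∧
      Lk n 2 P ⊂ Tk n ((n - 1) / 6) P :=
  stmt19_general n _ (by lia)
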